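/- arXiv:1609.09179 — 2 statements merged into one kernel-verified Lean document; each statement's English description precedes it below -/
import Mathlib

section
/- The MILP reformulation is exact: the minimum over all pairs (y, ρ) with y ∈ Ω, ρ ∈ ℝ, and ρ ≤ Σ_i (l i + (u i − l i) * y i) * x̄ i for every x̄ ∈ Ω, of the objective Σ_i u i * y i − ρ, equals the minimum over y ∈ Ω of the robustness cost R_y. -/
open Finset

/-!
For `x, y ∈ [0, 1]ⁿ` and `l ≤ c ≤ u`, put `w = l + (u - l) y`. The coordinatewise identity
`(u y - w x) - (c y - c x) = (u - c) y (1 - x) + (c - l) x (1 - y)` shows that no scenario gives `y`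
a regret above `u ⬝ᵥ y - min_x w ⬝ᵥ x`. If `y` is binary then `w y = u y`, so the scenario `w`
attains this bound. The variable `ρ` of the MILP linearises the remaining minimum over `x`.
-/

theorem isLeast_inf'_sub_inf' {α β G : Type*}
    [AddCommGroup G] [LinearOrder G] [IsOrderedAddMonoid G]
    {s : Finset α} (hs : s.Nonempty) {t : Finset β} (ht : t.Nonempty) (f : α → G) (g : α → β → G) :
    IsLeast {v | ∃ a ∈ s, ∃ ρ, (∀ b ∈ t, ρ ≤ g a b) ∧ v = f a - ρ}
      (s.inf' hs fun a => f a - t.inf' ht (g a)) := by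
  constructor
  · obtain ⟨a, ha, hmin⟩ := exists_mem_eq_inf' hs fun a => f a - t.inf' ht (g a)
    exact ⟨a, ha, t.inf' ht (g a), fun _ hb => inf'_le _ hb, hmin⟩
  · rintro _ ⟨a, ha, ρ, hρ, rfl⟩
    calc s.inf' hs (fun a => f a - t.inf' ht (g a))
        ≤ f a - t.inf' ht (g a) := inf'_le _ ha
      _ ≤ f a - ρ := sub_le_sub_left (le_inf' ht _ hρ) _

/-- A `0`-`1` vector, the encoding of a solution of a combinatorial problem. -/
def IsBinary {ι R : Type*} [Zero R] [One R] (y : ι → R) : Prop :=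
  ∀ i, y i = 0 ∨ y i = 1

/-- The cost vector `l + (u - l) y`. For binary `y` it charges `u` on the support of `y` and `l`
elsewhere, which is the interval scenario maximising the regret of `y`. -/
def worstScenario {ι R : Type*} [Ring R] (l u y : ι → R) : ι → R :=
  fun i => l i + (u i - l i) * y i

/-- The regret of `y` in scenario `c`: its excess cost over the cheapest element of `Ω`. -/
def regret {ι R : Type*} [Fintype ι] [Ring R] [LinearOrder R]
    (Ω : Finset (ι → R)) (hΩ : Ω.Nonempty) (y c : ι → R) : R :=
  c ⬝ᵥ y - Ω.inf' hΩ fun x => c ⬝ᵥ x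

/-- The robustness cost `R_y`: the supremum of the regret of `y` over the box `[l, u]` of
scenarios. It has the junk value `0` when the box is empty. -/
noncomputable def robustnessCost {ι : Type*} [Fintype ι] (l u : ι → ℝ)
    (Ω : Finset (ι → ℝ)) (hΩ : Ω.Nonempty) (y : ι → ℝ) : ℝ :=
  sSup (regret Ω hΩ y '' Set.Icc l u)

section Binary

variable {ι R : Type*} {y : ι → R}

theorem IsBinary.isIdempotentElem [MulZeroOneClass R] (hy : IsBinary y) : IsIdempotentElem y :=
  funext fun i => by rcases hy i with h | h <;> simp [h]

theorem IsBinary.mem_Icc [Semiring R] [PartialOrder R] [IsOrderedRing R] (hy : IsBinary y) :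
    y ∈ Set.Icc 0 1 :=
  ⟨fun i => by rcases hy i with h | h <;> simp [h],
    fun i => by rcases hy i with h | h <;> simp [h]⟩

end Binary

theorem worstScenario_dotProduct_self {ι R : Type*} [Fintype ι] [Ring R] (l u : ι → R) {y : ι → R}
    (hy : IsIdempotentElem y) : worstScenario l u y ⬝ᵥ y = u ⬝ᵥ y := by
  refine sum_congr rfl fun i _ => ?_
  have hyi : y i * y i = y i := congrFun hy i
  rw [worstScenario, add_mul, mul_assoc, hyi, ← add_mul, add_sub_cancel]

section OrderedRing

variable {ι R : Type*} {l u c x y : ι → R}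

theorem worstScenario_mem_Icc [Ring R] [PartialOrder R] [IsOrderedRing R]
    (hlu : l ≤ u) (hy : y ∈ Set.Icc 0 1) : worstScenario l u y ∈ Set.Icc l u := by
  have width_nonneg (i : ι) : 0 ≤ u i - l i := sub_nonneg.2 (hlu i)
  refine ⟨fun i => le_add_of_nonneg_right (mul_nonneg (width_nonneg i) (hy.1 i)), fun i => ?_⟩
  calc l i + (u i - l i) * y i
      ≤ l i + (u i - l i) := by gcongr; exact mul_le_of_le_one_right (width_nonneg i) (hy.2 i)
    _ = u i := add_sub_cancel _ _

theorem dotProduct_sub_dotProduct_le_worstScenario [Fintype ι]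
    [CommRing R] [PartialOrder R] [IsOrderedRing R]
    (hc : c ∈ Set.Icc l u) (hx : x ∈ Set.Icc 0 1) (hy : y ∈ Set.Icc 0 1) :
    c ⬝ᵥ y - c ⬝ᵥ x ≤ u ⬝ᵥ y - worstScenario l u y ⬝ᵥ x := by
  simp only [dotProduct, ← sum_sub_distrib]
  refine sum_le_sum fun i _ => sub_nonneg.1 ?_
  have gap_eq : u i * y i - worstScenario l u y i * x i - (c i * y i - c i * x i) =
      (u i - c i) * (y i * (1 - x i)) + (c i - l i) * (x i * (1 - y i)) := by
    rw [worstScenario]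
    ring
  rw [gap_eq]
  exact add_nonneg
    (mul_nonneg (sub_nonneg.2 (hc.2 i)) (mul_nonneg (hy.1 i) (sub_nonneg.2 (hx.2 i))))
    (mul_nonneg (sub_nonneg.2 (hc.1 i)) (mul_nonneg (hx.1 i) (sub_nonneg.2 (hy.2 i))))

variable [Fintype ι] [CommRing R] [LinearOrder R] [IsOrderedRing R]
  {Ω : Finset (ι → R)} (hΩ : Ω.Nonempty)

theorem regret_le_worstScenario (hΩ_unit : ∀ x ∈ Ω, x ∈ Set.Icc 0 1) (hy : y ∈ Set.Icc 0 1)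
    (hc : c ∈ Set.Icc l u) :
    regret Ω hΩ y c ≤ u ⬝ᵥ y - Ω.inf' hΩ fun x => worstScenario l u y ⬝ᵥ x := by
  obtain ⟨x, hx, hmin⟩ := exists_mem_eq_inf' hΩ fun x => c ⬝ᵥ x
  calc regret Ω hΩ y c
      = c ⬝ᵥ y - c ⬝ᵥ x := by rw [regret, hmin]
    _ ≤ u ⬝ᵥ y - worstScenario l u y ⬝ᵥ x :=
        dotProduct_sub_dotProduct_le_worstScenario hc (hΩ_unit x hx) hy
    _ ≤ u ⬝ᵥ y - Ω.inf' hΩ fun x => worstScenario l u y ⬝ᵥ x :=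
        sub_le_sub_left (inf'_le _ hx) _

theorem isGreatest_regret (hlu : l ≤ u) (hΩ_unit : ∀ x ∈ Ω, x ∈ Set.Icc 0 1) (hy : IsBinary y) :
    IsGreatest (regret Ω hΩ y '' Set.Icc l u)
      (u ⬝ᵥ y - Ω.inf' hΩ fun x => worstScenario l u y ⬝ᵥ x) := by
  constructor
  · refine ⟨worstScenario l u y, worstScenario_mem_Icc hlu hy.mem_Icc, ?_⟩
    rw [regret, worstScenario_dotProduct_self l u hy.isIdempotentElem]
  · rintro _ ⟨c, hc, rfl⟩
    exact regret_le_worstScenario hΩ hΩ_unit hy.mem_Icc hc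

end OrderedRing

theorem robustnessCost_eq {ι : Type*} [Fintype ι] {l u y : ι → ℝ} {Ω : Finset (ι → ℝ)}
    (hΩ : Ω.Nonempty) (hlu : l ≤ u) (hΩ_unit : ∀ x ∈ Ω, x ∈ Set.Icc 0 1) (hy : IsBinary y) :
    robustnessCost l u Ω hΩ y = u ⬝ᵥ y - Ω.inf' hΩ fun x => worstScenario l u y ⬝ᵥ x :=
  (isGreatest_regret hΩ hlu hΩ_unit hy).csSup_eq

theorem milp_reformulation_exact_general {ι : Type*} [Fintype ι] {l u : ι → ℝ} (hlu : l ≤ u)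
    {Ω : Finset (ι → ℝ)} (hΩ : Ω.Nonempty) (hbin : ∀ y ∈ Ω, IsBinary y) :
    IsLeast
      {v | ∃ y ∈ Ω, ∃ ρ, (∀ x ∈ Ω, ρ ≤ worstScenario l u y ⬝ᵥ x) ∧ v = u ⬝ᵥ y - ρ}
      (Ω.inf' hΩ fun y => robustnessCost l u Ω hΩ y) := by
  have hcost : ∀ y ∈ Ω, robustnessCost l u Ω hΩ y =
      u ⬝ᵥ y - Ω.inf' hΩ fun x => worstScenario l u y ⬝ᵥ x := fun y hy =>
    robustnessCost_eq hΩ hlu (fun x hx => (hbin x hx).mem_Icc) (hbin y hy)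
  rw [inf'_congr hΩ rfl hcost]
  exact isLeast_inf'_sub_inf' hΩ hΩ (u ⬝ᵥ ·) fun y x => worstScenario l u y ⬝ᵥ x

/-- The MILP reformulation is exact: the minimum, over all pairs `(y, ρ)` with
`y ∈ Ω`, `ρ : ℝ` and `ρ ≤ ∑ i, (l i + (u i - l i) * y i) * x̄ i` for every `x̄ ∈ Ω`, of the
objective `∑ i, u i * y i - ρ` equals the minimum over `y ∈ Ω` of the robustness cost `R_y`. -/
theorem milp_reformulation_exact
    (n : ℕ) (hn : 0 < n) (l u : Fin n → ℝ)
    (hl : ∀ i, 0 ≤ l i) (hlu : ∀ i, l i ≤ u i)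
    (Ω : Finset (Fin n → ℝ)) (hΩ : Ω.Nonempty)
    (hbin : ∀ y ∈ Ω, ∀ i, y i = 0 ∨ y i = 1) :
    IsLeast
      {v : ℝ | ∃ y ∈ Ω, ∃ ρ : ℝ,
        (∀ xbar ∈ Ω, ρ ≤ ∑ i, (l i + (u i - l i) * y i) * xbar i) ∧
        v = (∑ i, u i * y i) - ρ}
      (Ω.inf' hΩ (fun y =>
        sSup {r : ℝ | ∃ c : Fin n → ℝ, (∀ i, l i ≤ c i ∧ c i ≤ u i) ∧
          r = (∑ i, c i * y i) - Ω.inf' hΩ (fun x => ∑ i, c i * x i)})) := by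
  simpa only [robustnessCost, regret, worstScenario, dotProduct, Set.image, Set.mem_Icc, Pi.le_def,
    ← forall_and, eq_comm] using milp_reformulation_exact_general hlu hΩ hbin
end

section
/- Theorem 2 (monotonicity of induced-scenario regret under taking sub-paths): let β ∈ ℤ and let p ∈ P(β) be a non-elementary path (a path from o to t that visits some vertex more than once). Then for every elementary path p̃ ∈ P(β) with A[p̃] ⊊ A[p], the β-restricted regret of p̃ in its induced scenario s(p̃) is at most the β-restricted regret of p in its induced scenario s(p): C_{p̃}^{s(p̃)} − min_{q∈P(β)} C_q^{s(p̃)} ≤ C_p^{s(p)} − min_{q∈P(β)} C_q^{s(p)}. -/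
open Finset

/-- The arcs of a walk described by its list of vertices: consecutive pairs. -/
def walkArcs {V : Type*} (vs : List V) : List (V × V) := vs.zip vs.tail

/-- `IsPath A o t vs` : `vs` describes a directed walk from `o` to `t` whose arcs all belong to
`A` and are pairwise distinct. -/
def IsPath {V : Type*} (A : Finset (V × V)) (o t : V) (vs : List V) : Prop :=
  vs.head? = some o ∧ vs.getLast? = some t ∧
    (∀ a ∈ walkArcs vs, a ∈ A) ∧ (walkArcs vs).Nodup

/-- The set `A[p]` of arcs of a path. -/
def arcSet {V : Type*} [DecidableEq V] (vs : List V) : Finset (V × V) :=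
  (walkArcs vs).toFinset

/-!
Fix a feasible set `Q`. In the scenario induced by `S`, the arcs common to `S` and `Q` cancel, so
`S` costs `∑ a ∈ S \ Q, u a - ∑ a ∈ Q \ S, l a` more than `Q`. Enlarging `S` adds nonnegative terms
to the first sum and removes nonnegative terms from the second. The regret of `S` is the supremum
of these gaps over all feasible `Q`, hence is monotone in `S` as well.
-/

theorem sub_csInf_image_le_sub_csInf_image {ι R : Type*} [ConditionallyCompleteLattice R]
    [AddCommGroup R] [IsOrderedAddMonoid R] {F : Set ι} {f g : ι → R} {x y : R}
    (hF : F.Nonempty) (hg : BddBelow (g '' F)) (h : ∀ q ∈ F, x - f q ≤ y - g q) :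
    x - sInf (f '' F) ≤ y - sInf (g '' F) := by
  suffices hinf : x - y + sInf (g '' F) ≤ sInf (f '' F) by
    rwa [sub_le_sub_iff, ← sub_le_iff_le_add', add_sub_right_comm]
  refine le_csInf (hF.image f) (Set.forall_mem_image.2 fun q hq => ?_)
  calc x - y + sInf (g '' F)
      ≤ x - y + g q := by gcongr; exact csInf_le hg (Set.mem_image_of_mem g hq)
    _ ≤ f q := by
      rw [← add_sub_right_comm, sub_le_iff_le_add']
      exact sub_le_sub_iff.1 (h q hq)

section InducedScenario

variable {E R : Type*} [DecidableEq E]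

/-- The scenario induced by a set `S` of elements: an element costs `u` if it lies in `S` and `l`
otherwise. -/
def inducedScenario (l u : E → R) (S : Finset E) : E → R := S.piecewise u l

theorem inducedScenario_nonneg [Zero R] [Preorder R] {l u : E → R} (hl : 0 ≤ l) (hu : 0 ≤ u)
    (S : Finset E) : 0 ≤ inducedScenario l u S :=
  S.le_piecewise_of_le_of_le hu hl

theorem sum_inducedScenario_self [AddCommMonoid R] (l u : E → R) (S : Finset E) :
    ∑ a ∈ S, inducedScenario l u S a = ∑ a ∈ S, u a :=
  sum_congr rfl fun _ ha => S.piecewise_eq_of_mem u l ha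

theorem sum_inducedScenario_sub_sum [AddCommGroup R] (l u : E → R) (S Q : Finset E) :
    ∑ a ∈ S, inducedScenario l u S a - ∑ a ∈ Q, inducedScenario l u S a =
      ∑ a ∈ S \ Q, u a - ∑ a ∈ Q \ S, l a := by
  rw [← sum_sdiff_sub_sum_sdiff]
  congr 1
  · exact sum_congr rfl fun _ ha => S.piecewise_eq_of_mem u l (mem_sdiff.1 ha).1
  · exact sum_congr rfl fun _ ha => S.piecewise_eq_of_notMem u l (mem_sdiff.1 ha).2

theorem sum_inducedScenario_sub_sum_mono [AddCommGroup R] [PartialOrder R] [IsOrderedAddMonoid R]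
    {l u : E → R} (hl : 0 ≤ l) (hu : 0 ≤ u) (Q : Finset E) :
    Monotone fun S : Finset E =>
      ∑ a ∈ S, inducedScenario l u S a - ∑ a ∈ Q, inducedScenario l u S a := by
  intro S T hST
  simp only [sum_inducedScenario_sub_sum]
  exact sub_le_sub
    (sum_le_sum_of_subset_of_nonneg (sdiff_subset_sdiff hST Subset.rfl) fun a _ _ => hu a)
    (sum_le_sum_of_subset_of_nonneg (sdiff_subset_sdiff Subset.rfl hST) fun a _ _ => hl a)

end InducedScenario

/-- The regret of `S` in scenario `c` relative to a family `F` of feasible sets: the cost of `S`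
minus the least cost of a member of `F`. The minimum is encoded as an infimum, so it is meaningful
when `F` is nonempty and the costs of its members are bounded below. -/
def restrictedRegret {E R : Type*} [AddCommGroup R] [InfSet R] (F : Set (Finset E)) (c : E → R)
    (S : Finset E) : R :=
  ∑ a ∈ S, c a - sInf ((fun Q => ∑ a ∈ Q, c a) '' F)

theorem induced_regret_mono_of_subpath_general {E R : Type*} [DecidableEq E]
    [ConditionallyCompleteLattice R] [AddCommGroup R] [IsOrderedAddMonoid R]
    {l u : E → R} (hl : 0 ≤ l) (hu : 0 ≤ u) {F : Set (Finset E)} (hF : F.Nonempty) :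
    Monotone fun S : Finset E => restrictedRegret F (inducedScenario l u S) S := by
  intro S T hST
  have hbdd : BddBelow ((fun Q => ∑ a ∈ Q, inducedScenario l u T a) '' F) :=
    ⟨0, Set.forall_mem_image.2 fun Q _ =>
      sum_nonneg fun a _ => inducedScenario_nonneg hl hu T a⟩
  exact sub_csInf_image_le_sub_csInf_image hF hbdd fun Q _ =>
    sum_inducedScenario_sub_sum_mono hl hu Q hST

theorem restrictedRegret_image_arcSet {V : Type*} [DecidableEq V] (P : Set (List V))
    (l u : V × V → ℝ) (p : List V) :
    restrictedRegret (arcSet '' P) (inducedScenario l u (arcSet p)) (arcSet p) =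
      ∑ a ∈ arcSet p, u a -
        sInf {v : ℝ | ∃ q ∈ P, v = ∑ a ∈ arcSet q, if a ∈ arcSet p then u a else l a} := by
  rw [restrictedRegret, sum_inducedScenario_self, Set.image_image]
  simp only [Set.image, inducedScenario, Finset.piecewise, @eq_comm ℝ (∑ _ ∈ _, _)]

/-- Theorem 2: monotonicity of induced-scenario regret under taking sub-paths:
if `p ∈ P(β)` is a non-elementary path and `p̃ ∈ P(β)` is an elementary path with
`A[p̃] ⊊ A[p]`, then the β-restricted regret of `p̃` in its induced scenario `s(p̃)` is at most
the β-restricted regret of `p` in its induced scenario `s(p)`. -/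
theorem induced_regret_mono_of_subpath
    {V : Type*} [Fintype V] [DecidableEq V]
    (A : Finset (V × V)) (o t : V)
    (l u : V × V → ℕ) (hlu : ∀ a, l a ≤ u a) (d : V × V → ℕ) (β : ℤ)
    (P : Set (List V))
    (hP : P = {q : List V | IsPath A o t q ∧ (∑ a ∈ arcSet q, (d a : ℤ)) ≤ β})
    (hPne : P.Nonempty)
    (p : List V) (hp : p ∈ P) (hnonelem : ¬ p.Nodup)
    (pt : List V) (hpt : pt ∈ P) (helem : pt.Nodup)
    (hsub : arcSet pt ⊂ arcSet p) :
    (∑ a ∈ arcSet pt, (u a : ℝ)) -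
        sInf {v : ℝ | ∃ q ∈ P,
          v = ∑ a ∈ arcSet q, (if a ∈ arcSet pt then (u a : ℝ) else (l a : ℝ))} ≤
      (∑ a ∈ arcSet p, (u a : ℝ)) -
        sInf {v : ℝ | ∃ q ∈ P,
          v = ∑ a ∈ arcSet q, (if a ∈ arcSet p then (u a : ℝ) else (l a : ℝ))} := by
  simpa only [restrictedRegret_image_arcSet] using
    induced_regret_mono_of_subpath_general (l := fun a => (l a : ℝ)) (u := fun a => (u a : ℝ))
      (fun a => (l a).cast_nonneg) (fun a => (u a).cast_nonneg) (hPne.image arcSet) hsub.subset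
end
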